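/- Let F : (−∞,0) → ℝ be defined by F(x) = exp(−√(−x)). Then for every integer k ≥ 1 and every x < 0, the k-th derivative of F at x equals ρₖ(x)·exp(−√(−x)), where ρₖ(x) = 2^{−k}·∑_{j=k}^{2k−1} ((j−1)! / ((2j−2k)!!·(2k−j−1)!))·(−x)^{−j/2}. -/

import Mathlib

/-!
With `y = (√(-x))⁻¹` one has `y' = y ^ 3 / 2` and `(exp (-√(-x)))' = (y / 2) exp (-√(-x))` on `x < 0`.
Hence each derivative of `F` is a polynomial in `y` times `exp (-√(-x))`, and passing from the
`(n+1)`-st to the `(n+2)`-nd derivative turns the coefficients `c n i` of `y ^ (n + 1 + i) / 2 ^ (n + 1)`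
into `c (n+1) i = c n i + (n + i) c n (i-1)`. The solution is `c n i = (n+i choose 2i) (2i-1)‼`
(the coefficients of the Bessel polynomials): the recurrence is Pascal's rule together with
`(2i+1) (n+i+1 choose 2i+1) = (n+i+1) (n+i choose 2i)`. Finally
`c n i = (n+i)! / ((2i)‼ (n-i)!)`, which is the coefficient in `rho (n+1)` at `j = n + 1 + i`.
-/

open Real

/-- `ρₖ(x) = 2^{−k}·∑_{j=k}^{2k−1} ((j−1)! / ((2j−2k)!!·(2k−j−1)!))·(−x)^{−j/2}`,
where `n!` is the factorial, `n!!` the double factorial, and `(−x)^{−j/2}` the real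
power of the positive number `−x`. -/
noncomputable def rho (k : ℕ) (x : ℝ) : ℝ :=
  (2 : ℝ) ^ (-(k : ℝ)) * ∑ j ∈ Finset.Icc k (2 * k - 1),
    ((Nat.factorial (j - 1) : ℝ) /
      ((Nat.doubleFactorial (2 * j - 2 * k) : ℝ) * (Nat.factorial (2 * k - j - 1) : ℝ))) *
      (-x) ^ (-(j : ℝ) / 2)

/-- The Bessel polynomial coefficient `(n+i)! / (2 ^ i i! (n-i)!)`, written with a binomial
coefficient so that it vanishes for `i > n`. -/
noncomputable def besselCoeff (n i : ℕ) : ℝ :=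
  ((n + i).choose (2 * i) : ℝ) * ((Nat.factorial (2 * i) : ℝ) / (2 ^ i * (Nat.factorial i : ℝ)))

lemma besselCoeff_zero (n : ℕ) : besselCoeff n 0 = 1 := by
  simp [besselCoeff]

lemma besselCoeff_of_lt {n i : ℕ} (h : n < i) : besselCoeff n i = 0 := by
  simp [besselCoeff, Nat.choose_eq_zero_of_lt (show n + i < 2 * i by omega)]

lemma besselCoeff_succ (n m : ℕ) :
    besselCoeff (n + 1) (m + 1) = besselCoeff n (m + 1) + (n + 1 + m) * besselCoeff n m := by
  have hP : ((n + 1 + (m + 1)).choose (2 * (m + 1)) : ℝ)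
      = ((n + m + 1).choose (2 * m + 1) : ℝ) + ((n + (m + 1)).choose (2 * (m + 1)) : ℝ) := by
    have := Nat.choose_succ_succ (n + m + 1) (2 * m + 1)
    rw [show n + 1 + (m + 1) = (n + m + 1).succ by omega,
      show 2 * (m + 1) = (2 * m + 1).succ by omega, this]
    push_cast
    rfl
  have hA : ((n : ℝ) + m + 1) * ((n + m).choose (2 * m) : ℝ)
      = ((n + m + 1).choose (2 * m + 1) : ℝ) * (2 * m + 1) := by
    exact_mod_cast Nat.add_one_mul_choose_eq (n + m) (2 * m)
  have hD : (Nat.factorial (2 * (m + 1)) : ℝ) / (2 ^ (m + 1) * (Nat.factorial (m + 1) : ℝ))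
      = (2 * m + 1) * ((Nat.factorial (2 * m) : ℝ) / (2 ^ m * (Nat.factorial m : ℝ))) := by
    rw [show 2 * (m + 1) = 2 * m + 1 + 1 by ring, Nat.factorial_succ, Nat.factorial_succ,
      Nat.factorial_succ]
    have : (Nat.factorial m : ℝ) ≠ 0 := by positivity
    push_cast
    field_simp
    ring
  unfold besselCoeff
  rw [hP, hD]
  linear_combination
    -((Nat.factorial (2 * m) : ℝ) / (2 ^ m * (Nat.factorial m : ℝ))) * hA

lemma besselCoeff_eq {n i : ℕ} (h : i ≤ n) :
    besselCoeff n i = (Nat.factorial (n + i) : ℝ) /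
      ((Nat.doubleFactorial (2 * i) : ℝ) * (Nat.factorial (n - i) : ℝ)) := by
  have h1 : ((n + i).choose (2 * i) : ℝ) * (Nat.factorial (2 * i) : ℝ) * (Nat.factorial (n - i) : ℝ)
      = (Nat.factorial (n + i) : ℝ) := by
    have := Nat.choose_mul_factorial_mul_factorial (show 2 * i ≤ n + i by omega)
    rw [show n + i - 2 * i = n - i by omega] at this
    exact_mod_cast this
  have h2 : (Nat.factorial i : ℝ) ≠ 0 := by positivity
  have h3 : (Nat.factorial (n - i) : ℝ) ≠ 0 := by positivity
  rw [besselCoeff, ← h1, Nat.doubleFactorial_two_mul]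
  push_cast
  field_simp

/-- `ρ_{n+1}` as a polynomial in `y = (√(-x))⁻¹`. -/
noncomputable def rhoPoly (n : ℕ) (y : ℝ) : ℝ :=
  ∑ i ∈ Finset.range (n + 1), besselCoeff n i * y ^ (n + 1 + i) / 2 ^ (n + 1)

lemma rho_succ_eq (n : ℕ) {x : ℝ} (hx : x < 0) :
    rho (n + 1) x = rhoPoly n (√(-x))⁻¹ := by
  have hx' : 0 ≤ -x := by linarith
  have hpow (j : ℕ) : (-x) ^ (-(j : ℝ) / 2) = (√(-x))⁻¹ ^ j := by
    rw [neg_div, rpow_neg hx', inv_pow, Real.sqrt_eq_rpow, ← rpow_natCast, ← rpow_mul hx']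
    congr 2
    ring
  have hIcc : Finset.Icc (n + 1) (2 * (n + 1) - 1) = Finset.Ico (n + 1) (2 * (n + 1)) := by
    ext j
    simp only [Finset.mem_Icc, Finset.mem_Ico]
    omega
  rw [rho, rhoPoly, hIcc, Finset.sum_Ico_eq_sum_range,
    show 2 * (n + 1) - (n + 1) = n + 1 by omega, Finset.mul_sum, rpow_neg zero_le_two, rpow_natCast]
  refine Finset.sum_congr rfl fun i hi => ?_
  have hi' : i ≤ n := by
    have := Finset.mem_range.mp hi
    omega
  rw [hpow, besselCoeff_eq hi', show n + 1 + i - 1 = n + i by omega,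
    show 2 * (n + 1 + i) - 2 * (n + 1) = 2 * i by omega,
    show 2 * (n + 1) - (n + 1 + i) - 1 = n - i by omega]
  ring

/-- The recurrence `ρ_{k+1} = ρₖ' + ρₖ / (2 √(-x))`, in terms of `y`, using `y' = y ^ 3 / 2`. -/
lemma rhoPoly_succ (n : ℕ) (y : ℝ) :
    rhoPoly (n + 1) y =
      (∑ i ∈ Finset.range (n + 1),
        besselCoeff n i * ((n + 1 + i : ℕ) * y ^ (n + i) * (y ^ 3 / 2)) / 2 ^ (n + 1))
      + rhoPoly n y * (y / 2) := by
  -- The sum for `rhoPoly n` gains a vanishing top term, so that both sides shift alike.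
  have hext : rhoPoly n y
      = ∑ i ∈ Finset.range (n + 2), besselCoeff n i * y ^ (n + 1 + i) / 2 ^ (n + 1) := by
    rw [Finset.sum_range_succ _ (n + 1), besselCoeff_of_lt (Nat.lt_succ_self n), rhoPoly]
    simp
  rw [hext, rhoPoly, Finset.sum_range_succ' _ (n + 1), Finset.sum_range_succ' _ (n + 1), add_mul, ← add_assoc,
    Finset.sum_mul, ← Finset.sum_add_distrib]
  congr 1
  · refine Finset.sum_congr rfl fun i _ => ?_
    rw [besselCoeff_succ]
    push_cast
    ring
  · rw [besselCoeff_zero, besselCoeff_zero]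
    ring

lemma hasDerivAt_sqrt_neg {x : ℝ} (hx : x < 0) :
    HasDerivAt (fun t : ℝ => √(-t)) (-((√(-x))⁻¹ / 2)) x := by
  convert (hasDerivAt_neg x).sqrt (by linarith) using 1
  rw [neg_div, one_div, mul_inv]
  ring

lemma hasDerivAt_inv_sqrt_neg {x : ℝ} (hx : x < 0) :
    HasDerivAt (fun t : ℝ => (√(-t))⁻¹) ((√(-x))⁻¹ ^ 3 / 2) x := by
  have h : √(-x) ≠ 0 := (Real.sqrt_pos.mpr (by linarith)).ne'
  refine ((hasDerivAt_sqrt_neg hx).fun_inv h).congr_deriv ?_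
  field_simp

lemma hasDerivAt_exp_neg_sqrt {x : ℝ} (hx : x < 0) :
    HasDerivAt (fun t : ℝ => exp (-√(-t))) ((√(-x))⁻¹ / 2 * exp (-√(-x))) x := by
  refine (hasDerivAt_sqrt_neg hx).fun_neg.exp.congr_deriv ?_
  ring

lemma hasDerivAt_rhoPoly (n : ℕ) {x : ℝ} (hx : x < 0) :
    HasDerivAt (fun t : ℝ => rhoPoly n (√(-t))⁻¹ * exp (-√(-t)))
      (rhoPoly (n + 1) (√(-x))⁻¹ * exp (-√(-x))) x := by
  have hsum : HasDerivAt (fun t : ℝ => rhoPoly n (√(-t))⁻¹)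
      (∑ i ∈ Finset.range (n + 1), besselCoeff n i *
        ((n + 1 + i : ℕ) * (√(-x))⁻¹ ^ (n + i) * ((√(-x))⁻¹ ^ 3 / 2)) / 2 ^ (n + 1)) x := by
    unfold rhoPoly
    refine HasDerivAt.fun_sum fun i _ => ?_
    have := (((hasDerivAt_inv_sqrt_neg hx).fun_pow (n + 1 + i)).const_mul
      (besselCoeff n i)).div_const (2 ^ (n + 1))
    rwa [show n + 1 + i - 1 = n + i by omega] at this
  refine (hsum.fun_mul (hasDerivAt_exp_neg_sqrt hx)).congr_deriv ?_
  rw [rhoPoly_succ]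
  ring

lemma iteratedDeriv_exp_neg_sqrt (n : ℕ) : ∀ x : ℝ, x < 0 →
    iteratedDeriv (n + 1) (fun t : ℝ => exp (-√(-t))) x
      = rhoPoly n (√(-x))⁻¹ * exp (-√(-x)) := by
  induction n with
  | zero =>
    intro x hx
    rw [zero_add, iteratedDeriv_one, (hasDerivAt_exp_neg_sqrt hx).deriv]
    simp [rhoPoly, besselCoeff_zero]
  | succ n ih =>
    intro x hx
    rw [iteratedDeriv_succ]
    have hev : iteratedDeriv (n + 1) (fun t : ℝ => exp (-√(-t)))
        =ᶠ[nhds x] fun t => rhoPoly n (√(-t))⁻¹ * exp (-√(-t)) := by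
      filter_upwards [Iio_mem_nhds hx] with t ht using ih t ht
    rw [hev.deriv_eq, (hasDerivAt_rhoPoly n hx).deriv]

/-- For `F(x) = exp(−√(−x))` and every `k ≥ 1`, the `k`-th derivative of `F` at any
`x < 0` equals `ρₖ(x)·exp(−√(−x))`. -/
theorem stmt_10 (F : ℝ → ℝ) (hF : ∀ x, F x = exp (-Real.sqrt (-x)))
    (k : ℕ) (hk : 1 ≤ k) (x : ℝ) (hx : x < 0) :
    iteratedDeriv k F x = rho k x * exp (-Real.sqrt (-x)) := by
  obtain ⟨n, rfl⟩ := Nat.exists_eq_add_of_le' hk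
  rw [funext hF, iteratedDeriv_exp_neg_sqrt n x hx, rho_succ_eq n hx]
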